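/- Fix σ with 0<σ≤1 and let K:ℕ→ℕ with K(m)≥1 be such that limsup_{m→∞} p_m^σ/(K(m)·ln p_m) < ∞. Then the mean error ⟨E_m^{(σ)}⟩ := (1/K(m))·Σ_{k=0}^{K(m)−1} E_m^{(σ)}(k,K(m)) satisfies ⟨E_m^{(σ)}⟩ = o( p_m^σ/(K(m)·ln p_m) ) as m→∞; in particular ⟨E_m^{(σ)}⟩ → 0. -/

import Mathlib

open Filter Asymptotics
open scoped Topology

noncomputable section

/-- The `j`-th prime number, `0`-indexed: `nthPrime 0 = 2`, `nthPrime 1 = 3`, … -/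
def nthPrime (j : ℕ) : ℕ := Nat.nth Nat.Prime j

/-- The partition function `Z_m = ∏_{j=1}^m (1 + 1/p_j)`. -/
def Zm (m : ℕ) : ℝ := ∏ j ∈ Finset.range m, (1 + 1 / (nthPrime j : ℝ))

/-- The element `n = ∏_{j=1}^m p_j^{ν_j}` of `Ω_m` parametrized by `ν ∈ {0,1}^m`. -/
def elt (m : ℕ) (ν : Fin m → Bool) : ℕ := ∏ j : Fin m, if ν j then nthPrime j else 1

/-- The mass `π_m(n) = 1/(Z_m n)`. -/
def mass (m : ℕ) (ν : Fin m → Bool) : ℝ := 1 / (Zm m * (elt m ν : ℝ))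

open scoped Classical in
/-- The error term
`E_m^{(σ)}(k,K) = Π_m{ σk/K < ln n/ln p_m < σ(k+1)/K } - e^{-γ} σ/K`. -/
def Err (m : ℕ) (σ : ℝ) (K : ℕ) (k : ℕ) : ℝ :=
  (∑ ν ∈ Finset.univ.filter (fun ν : Fin m → Bool =>
      σ * k / K < Real.log (elt m ν) / Real.log (nthPrime (m - 1)) ∧
      Real.log (elt m ν) / Real.log (nthPrime (m - 1)) < σ * (k + 1) / K),
    mass m ν) - Real.exp (-Real.eulerMascheroniConstant) * σ / K

/-!
The windows `(δ_k, δ_{k+1})` are pairwise disjoint, so their `Π_m`-probabilities add up to a number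
in `[0, 1]`, while the subtracted terms add up to `e^{-γ} σ`. Hence `∑ k, E_m^{(σ)}(k, K)` is
bounded uniformly in `m` and `K`, and the mean error is `O(1 / K(m))`. This is
`o(p_m^σ / (K(m) ln p_m))` since `p_m^σ / ln p_m → ∞`.
-/

theorem isBigO_one_of_eventually_nonneg_of_le {α : Type*} {l : Filter α} {f : α → ℝ} {C : ℝ}
    (hf : ∀ᶠ a in l, 0 ≤ f a) (hC : ∀ᶠ a in l, f a ≤ C) : f =O[l] fun _ => (1 : ℝ) := by
  refine .of_bound C ?_
  filter_upwards [hf, hC] with a ha haC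
  rwa [norm_one, mul_one, Real.norm_of_nonneg ha]

theorem isLittleO_one_rpow_div_log_atTop {σ : ℝ} (hσ : 0 < σ) :
    (fun _ : ℝ => (1 : ℝ)) =o[atTop] fun x : ℝ => x ^ σ / Real.log x := by
  have hlog : (fun x : ℝ => Real.log x / Real.log x) =o[atTop] fun x : ℝ => x ^ σ / Real.log x := by
    simpa only [div_eq_mul_inv] using
      (isLittleO_log_rpow_atTop hσ).mul_isBigO (isBigO_refl (fun x : ℝ => (Real.log x)⁻¹) atTop)
  refine hlog.congr' ?_ EventuallyEq.rfl
  filter_upwards [eventually_gt_atTop 1] with x hx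
  exact div_self (Real.log_pos hx).ne'

theorem tendsto_nthPrime_atTop : Tendsto nthPrime atTop atTop :=
  (Nat.nth_strictMono Nat.infinite_setOfPred_prime).tendsto_atTop

theorem isLittleO_one_nthPrime_rpow_div_log {σ : ℝ} (hσ : 0 < σ) :
    (fun _ : ℕ => (1 : ℝ)) =o[atTop]
      fun m : ℕ => (nthPrime (m - 1) : ℝ) ^ σ / Real.log (nthPrime (m - 1)) :=
  (isLittleO_one_rpow_div_log_atTop hσ).comp_tendsto <|
    tendsto_natCast_atTop_atTop.comp <| tendsto_nthPrime_atTop.comp <| tendsto_sub_atTop_nat 1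

theorem Zm_pos (m : ℕ) : 0 < Zm m :=
  Finset.prod_pos fun _ _ => by positivity

theorem mass_nonneg (m : ℕ) (ν : Fin m → Bool) : 0 ≤ mass m ν :=
  one_div_nonneg.2 <| mul_nonneg (Zm_pos m).le (Nat.cast_nonneg _)

theorem sum_one_div_elt (m : ℕ) : ∑ ν : Fin m → Bool, 1 / (elt m ν : ℝ) = Zm m := by
  calc ∑ ν : Fin m → Bool, 1 / (elt m ν : ℝ)
      = ∑ ν : Fin m → Bool, ∏ j : Fin m, if ν j then 1 / (nthPrime j : ℝ) else 1 := by
        refine Finset.sum_congr rfl fun ν _ => ?_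
        simp only [elt, one_div, Nat.cast_prod, Nat.cast_ite, Nat.cast_one,
          ← Finset.prod_inv_distrib, apply_ite (·⁻¹ : ℝ → ℝ), inv_one]
    _ = ∏ j : Fin m, ∑ b : Bool, if b then 1 / (nthPrime j : ℝ) else 1 := by
        rw [Finset.prod_univ_sum, Fintype.piFinset_univ]
    _ = Zm m := by
        simp only [Zm, Finset.prod_range, Fintype.sum_bool, if_true, Bool.false_eq_true, if_false,
          add_comm]

theorem sum_mass (m : ℕ) : ∑ ν : Fin m → Bool, mass m ν = 1 := by
  simp only [mass, ← one_div_mul_one_div, ← Finset.mul_sum, sum_one_div_elt]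
  exact one_div_mul_cancel (Zm_pos m).ne'

open scoped Classical in
/-- The probability `Π_m{ ln n / ln p_m ∈ S }`, as a finite sum of masses over the exponent vectors
`ν` of the integers `n`. -/
def logRatioProb (m : ℕ) (S : Set ℝ) : ℝ :=
  ∑ ν with Real.log (elt m ν) / Real.log (nthPrime (m - 1)) ∈ S, mass m ν

theorem logRatioProb_nonneg (m : ℕ) (S : Set ℝ) : 0 ≤ logRatioProb m S :=
  Finset.sum_nonneg fun ν _ => mass_nonneg m ν

theorem sum_logRatioProb_le_one {ι : Type*} (m : ℕ) (s : Finset ι) {S : ι → Set ℝ}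
    (hS : (s : Set ι).PairwiseDisjoint S) : ∑ i ∈ s, logRatioProb m (S i) ≤ 1 := by
  classical
  unfold logRatioProb
  rw [← Finset.sum_biUnion, ← sum_mass m]
  · exact Finset.sum_le_univ_sum_of_nonneg (mass_nonneg m)
  · exact fun i hi j hj hij => Finset.disjoint_filter.2 fun _ _ hνi hνj =>
      Set.disjoint_left.1 (hS hi hj hij) hνi hνj

theorem Err_eq_logRatioProb_sub (m : ℕ) (σ : ℝ) (K k : ℕ) :
    Err m σ K k = logRatioProb m (Set.Ioo (σ * k / K) (σ * (k + 1) / K)) -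
      Real.exp (-Real.eulerMascheroniConstant) * σ / K := by
  simp only [Err, logRatioProb, Set.mem_Ioo]

theorem pairwise_disjoint_Ioo_mul_div {σ : ℝ} (hσ : 0 ≤ σ) (K : ℕ) :
    Pairwise (Function.onFun Disjoint fun k : ℕ => Set.Ioo (σ * k / K) (σ * (k + 1) / K)) := by
  have hmono : Monotone fun k : ℕ => σ * k / K := fun a b hab => by beta_reduce; gcongr
  simpa only [Nat.succ_eq_succ, Nat.cast_succ] using hmono.pairwise_disjoint_on_Ioo_succ

theorem sum_Err (m : ℕ) (σ : ℝ) {K : ℕ} (hK : K ≠ 0) :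
    ∑ k ∈ Finset.range K, Err m σ K k =
      ∑ k ∈ Finset.range K, logRatioProb m (Set.Ioo (σ * k / K) (σ * (k + 1) / K)) -
        Real.exp (-Real.eulerMascheroniConstant) * σ := by
  simp only [Err_eq_logRatioProb_sub, Finset.sum_sub_distrib, Finset.sum_const, Finset.card_range,
    nsmul_eq_mul, mul_div_cancel₀ _ (Nat.cast_ne_zero (R := ℝ).2 hK)]

theorem abs_sum_Err_le (m : ℕ) {σ : ℝ} (hσ : 0 ≤ σ) {K : ℕ} (hK : K ≠ 0) :
    |∑ k ∈ Finset.range K, Err m σ K k| ≤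
      max 1 (Real.exp (-Real.eulerMascheroniConstant) * σ) := by
  have hsum_le : ∑ k ∈ Finset.range K, logRatioProb m (Set.Ioo (σ * k / K) (σ * (k + 1) / K)) ≤ 1 :=
    sum_logRatioProb_le_one m _ ((pairwise_disjoint_Ioo_mul_div hσ K).set_pairwise _)
  rw [sum_Err m σ hK]
  exact abs_sub_le_of_nonneg_of_le (Finset.sum_nonneg fun _ _ => logRatioProb_nonneg _ _)
    (hsum_le.trans (le_max_left _ _)) (by positivity) (le_max_right _ _)

theorem sum_Err_isBigO_one {σ : ℝ} (hσ : 0 ≤ σ) {K : ℕ → ℕ} (hK : ∀ m, K m ≠ 0) (l : Filter ℕ) :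
    (fun m : ℕ => ∑ k ∈ Finset.range (K m), Err m σ (K m) k) =O[l] fun _ => (1 : ℝ) :=
  .of_bound (max 1 (Real.exp (-Real.eulerMascheroniConstant) * σ)) <| .of_forall fun m => by
    simpa only [norm_one, mul_one, Real.norm_eq_abs] using abs_sum_Err_le m hσ (hK m)

theorem mean_error_little_o_general (σ : ℝ) (hσ : 0 < σ) (K : ℕ → ℕ) (hK : ∀ m, 1 ≤ K m) :
    ((fun m : ℕ => (1 / (K m : ℝ)) * ∑ k ∈ Finset.range (K m), Err m σ (K m) k) =o[atTop]
      fun m : ℕ => (nthPrime (m - 1) : ℝ) ^ σ / ((K m : ℝ) * Real.log (nthPrime (m - 1)))) ∧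
    ((∃ C : ℝ, ∀ᶠ m : ℕ in atTop,
        (nthPrime (m - 1) : ℝ) ^ σ / ((K m : ℝ) * Real.log (nthPrime (m - 1))) ≤ C) →
      Tendsto (fun m : ℕ => (1 / (K m : ℝ)) * ∑ k ∈ Finset.range (K m), Err m σ (K m) k)
        atTop (𝓝 0)) := by
  have hsum : (fun m : ℕ => ∑ k ∈ Finset.range (K m), Err m σ (K m) k) =o[atTop]
      fun m : ℕ => (nthPrime (m - 1) : ℝ) ^ σ / Real.log (nthPrime (m - 1)) :=
    (sum_Err_isBigO_one hσ.le (fun m => Nat.one_le_iff_ne_zero.1 (hK m)) atTop).trans_isLittleO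
      (isLittleO_one_nthPrime_rpow_div_log hσ)
  have hmean : (fun m : ℕ => (1 / (K m : ℝ)) * ∑ k ∈ Finset.range (K m), Err m σ (K m) k) =o[atTop]
      fun m : ℕ => (nthPrime (m - 1) : ℝ) ^ σ / ((K m : ℝ) * Real.log (nthPrime (m - 1))) :=
    ((isBigO_refl (fun m : ℕ => 1 / (K m : ℝ)) atTop).mul_isLittleO hsum).congr_right fun m => by
      rw [div_mul_div_comm, one_mul]
  refine ⟨hmean, fun ⟨C, hC⟩ => (isLittleO_one_iff ℝ).1 (hmean.trans_isBigO ?_)⟩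
  exact isBigO_one_of_eventually_nonneg_of_le (.of_forall fun m => by positivity) hC

/-- Corollary 2 of the paper: if `limsup p_m^σ/(K(m) ln p_m) < ∞` then the mean error
`⟨E_m^{(σ)}⟩ = (1/K(m)) ∑_k E_m^{(σ)}(k,K(m))` is `o(p_m^σ/(K(m) ln p_m))`;
in particular it tends to `0`. -/
theorem mean_error_little_o (σ : ℝ) (hσ0 : 0 < σ) (hσ1 : σ ≤ 1)
    (K : ℕ → ℕ) (hK : ∀ m, 1 ≤ K m)
    (hbd : ∃ C : ℝ, ∀ᶠ m : ℕ in atTop,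
      (nthPrime (m - 1) : ℝ) ^ σ / ((K m : ℝ) * Real.log (nthPrime (m - 1))) ≤ C) :
    ((fun m : ℕ => (1 / (K m : ℝ)) * ∑ k ∈ Finset.range (K m), Err m σ (K m) k) =o[atTop]
      fun m : ℕ => (nthPrime (m - 1) : ℝ) ^ σ / ((K m : ℝ) * Real.log (nthPrime (m - 1)))) ∧
    Tendsto (fun m : ℕ => (1 / (K m : ℝ)) * ∑ k ∈ Finset.range (K m), Err m σ (K m) k)
      atTop (𝓝 0) := by
  exact (mean_error_little_o_general σ hσ0 K hK).imp_right fun h => h hbd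

end
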